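/- Let M₁ = (S, ℐ₁) and M₂ = (S, ℐ₂) be matroids on the same finite ground set S, let R be a maximum common independent set of M₁ and M₂, and let I be a maximal common independent set of M₁ and M₂ with |I| < |R|. Then there exists a maximal common independent set J of M₁ and M₂ such that |I| ≤ |J|, |R △ J| < |R △ I|, and |I △ J| ≤ 3. -/

import Mathlib

open scoped symmDiff

theorem aux_card {α : Type*} [Fintype α] (M : Matroid α) {I J : Set α}
    (hJ : M.Indep J) : (J ∩ M.closure I).ncard ≤ I.ncard := by
  have h1 : (J ∩ M.closure I).encard ≤ I.encard := by
    rw [← (hJ.subset Set.inter_subset_left).eRk_eq_encard]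
    refine (M.eRk_mono Set.inter_subset_right).trans ?_
    rw [M.eRk_closure_eq]
    exact M.eRk_le_encard I
  rw [← (Set.toFinite I).cast_ncard_eq, ← (Set.toFinite _).cast_ncard_eq] at h1
  exact_mod_cast h1

/-- If `R` is a maximum common independent set of `M₁, M₂` and `I` a maximal
common independent set with `|I| < |R|`, then there is a maximal common independent set `J`
with `|I| ≤ |J|`, `|R ∆ J| < |R ∆ I|`, and `|I ∆ J| ≤ 3`. -/
theorem stmt7 {α : Type*} [Fintype α] (M₁ M₂ : Matroid α)
    (hE₁ : M₁.E = Set.univ) (hE₂ : M₂.E = Set.univ) {R I : Set α}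
    (hR : (M₁.Indep R ∧ M₂.Indep R) ∧
      ∀ T : Set α, M₁.Indep T → M₂.Indep T → T.ncard ≤ R.ncard)
    (hI : Maximal (fun T => M₁.Indep T ∧ M₂.Indep T) I)
    (hlt : I.ncard < R.ncard) :
    ∃ J : Set α, Maximal (fun T => M₁.Indep T ∧ M₂.Indep T) J ∧
      I.ncard ≤ J.ncard ∧ (R ∆ J).ncard < (R ∆ I).ncard ∧ (I ∆ J).ncard ≤ 3 := by
  obtain ⟨⟨hR1, hR2⟩, -⟩ := hR
  obtain ⟨⟨hI1, hI2⟩, hImax⟩ := id hI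
  obtain ⟨x, ⟨hxR, hxI⟩, hx1⟩ : ∃ x ∈ R \ I, M₁.Indep (insert x I) := by
    refine hI1.augment hR1 ?_
    rw [← (Set.toFinite I).cast_ncard_eq, ← (Set.toFinite R).cast_ncard_eq]
    exact_mod_cast hlt
  have hins : ∀ z, z ∉ I → M₁.Indep (insert z I) → ¬ M₂.Indep (insert z I) := fun z hz h1 h2 =>
    hz (hImax ⟨h1, h2⟩ (Set.subset_insert z I) (Set.mem_insert z I))
  have hx2 := hins x hxI hx1
  have hxcl : x ∈ M₂.closure I := by
    by_contra h
    exact hx2 ((hI2.notMem_closure_iff_of_notMem hxI (by simp [hE₂])).1 h)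
  have hC := hI2.fundCircuit_isCircuit hxcl hxI
  obtain ⟨y, hyC, hyR⟩ : ∃ y ∈ M₂.fundCircuit x I, y ∉ R := by
    by_contra! h
    exact hC.dep.not_indep (hR2.subset h)
  have hyx : y ≠ x := by rintro rfl; exact hyR hxR
  have hyI : y ∈ I := ((M₂.fundCircuit_subset_insert x I) hyC).resolve_left hyx
  have hJ2 : M₂.Indep (insert x I \ {y}) := (hI2.mem_fundCircuit_iff hxcl hxI).1 hyC
  have hJ1 : M₁.Indep (insert x I \ {y}) := hx1.subset Set.diff_subset
  obtain ⟨J, hJ0, hJ⟩ := (Set.toFinite {T | M₁.Indep T ∧ M₂.Indep T}).exists_le_maximal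
    (a := insert x I \ {y}) ⟨hJ1, hJ2⟩
  have hJ0 : insert x I \ {y} ⊆ J := hJ0
  have hc0 : (insert x I \ {y}).ncard = I.ncard := by
    rw [Set.ncard_diff_singleton_of_mem (Set.mem_insert_of_mem x hyI),
      Set.ncard_insert_of_notMem hxI]
    rfl
  have hle : I.ncard ≤ J.ncard := hc0 ▸ Set.ncard_le_ncard hJ0
  have hcJ : J.ncard ≤ I.ncard + 1 := by
    have hA := aux_card M₁ (I := I) hJ.1.1
    have hB := aux_card M₂ (I := I) hJ.1.2
    have hU : (J ∩ M₁.closure I) ∪ (J ∩ M₂.closure I) = J := by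
      rw [← Set.inter_union_distrib_left, Set.inter_eq_left]
      intro z _
      by_contra h
      have ha : z ∉ M₁.closure I := fun h' => h (Or.inl h')
      have hb : z ∉ M₂.closure I := fun h' => h (Or.inr h')
      have hz : z ∉ I := fun h' => ha (M₁.mem_closure_of_mem h')
      exact hins z hz ((hI1.notMem_closure_iff_of_notMem hz (by simp [hE₁])).1 ha)
        ((hI2.notMem_closure_iff_of_notMem hz (by simp [hE₂])).1 hb)
    have hN : I \ {y} ⊆ (J ∩ M₁.closure I) ∩ (J ∩ M₂.closure I) := by
      rintro z ⟨hz, hzy⟩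
      have : z ∈ J := hJ0 ⟨Or.inr hz, hzy⟩
      exact ⟨⟨this, M₁.mem_closure_of_mem hz⟩, ⟨this, M₂.mem_closure_of_mem hz⟩⟩
    have h1 := Set.ncard_union_add_ncard_inter (J ∩ M₁.closure I) (J ∩ M₂.closure I)
    have h2 := Set.ncard_le_ncard hN
    have h3 := Set.ncard_diff_singleton_add_one hyI
    rw [hU] at h1
    omega
  have hD : (J \ (insert x I \ {y})).ncard ≤ 1 := by
    have := Set.ncard_diff_add_ncard_of_subset hJ0
    omega
  refine ⟨J, hJ, hle, ?_, ?_⟩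
  · have hs : R ∆ J ⊆ ((R ∆ I) \ {x, y}) ∪ (J \ (insert x I \ {y})) := by
      intro z hz
      have := @hJ0 z
      simp only [Set.mem_symmDiff, Set.mem_union, Set.mem_diff, Set.mem_insert_iff,
        Set.mem_singleton_iff] at *
      grind
    have h1 := Set.ncard_le_ncard hs
    have h2 := Set.ncard_union_le ((R ∆ I) \ {x, y}) (J \ (insert x I \ {y}))
    have hxy : ({x, y} : Set α) ⊆ R ∆ I := by
      rintro z (rfl | rfl)
      · exact Or.inl ⟨hxR, hxI⟩
      · exact Or.inr ⟨hyI, hyR⟩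
    have h3 := Set.ncard_diff_add_ncard_of_subset hxy
    rw [Set.ncard_pair hyx.symm] at h3
    omega
  · have hs : I ∆ J ⊆ {x, y} ∪ (J \ (insert x I \ {y})) := by
      intro z hz
      have := @hJ0 z
      simp only [Set.mem_symmDiff, Set.mem_union, Set.mem_diff, Set.mem_insert_iff,
        Set.mem_singleton_iff] at *
      grind
    have h1 := Set.ncard_le_ncard hs
    have h2 := Set.ncard_union_le {x, y} (J \ (insert x I \ {y}))
    rw [Set.ncard_pair hyx.symm] at h2
    omega
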